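/- Let p ≥ 1, μ ≥ 0, a ≥ 0, σ > 0 and δ ≥ 0 be real numbers with δ < (1 − σ)·p − μ. Let W, t, m, s : ℕ → ℝ be functions such that: (i) for every ε > 0, for all sufficiently large N ≥ 2, W(N) ≥ (N : ℝ)^(p − ε); (ii) for every ε > 0, for all sufficiently large N ≥ 2, t(N) ≤ (N : ℝ)^(δ + ε); (iii) for all N ≥ 2, t(N) ≥ 1, 1 ≤ m(N) ≤ (N : ℝ)^μ, 1 ≤ s(N) ≤ (N : ℝ)^σ, and m(N) · t(N) · (s(N))^a ≥ W(N). Then a > p. (Corollary 2: an MPC protocol running in N^{δ+o(1)} rounds with m ≤ N^μ machines and local memory size s ≤ N^σ, where δ < (1 − σ)p − μ, for a problem of sequential time complexity exponent p, must have average local computation exponent strictly greater than p.) -/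

import Mathlib

/-! Comparing exponents of `N` in `N^(p-ε) ≤ W ≤ m · t · s^a ≤ N^(μ + (δ+ε) + σa)` at a single
large `N` gives `p - ε ≤ μ + δ + ε + σa`. If `a ≤ p`, this bounds the positive gap
`(1-σ)p - μ - δ` by `2ε`, which fails for `ε` equal to a third of the gap. -/

/-- Corollary 2: an MPC protocol running in `N^{δ+o(1)}` rounds with `m ≤ N^μ` machines
and local memory size `s ≤ N^σ`, where `δ < (1 - σ)p - μ`, for a problem of sequential time
complexity exponent `p`, must have average local computation exponent `a > p`. -/
theorem stmt_5 (p μ a σ δ : ℝ)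
    (hp : 1 ≤ p) (hμ : 0 ≤ μ) (ha : 0 ≤ a) (hσ : 0 < σ) (hδ : 0 ≤ δ)
    (h : δ < (1 - σ) * p - μ)
    (W t m s : ℕ → ℝ)
    (hW : ∀ ε > (0 : ℝ), ∃ N₀ : ℕ, ∀ N : ℕ, N₀ ≤ N → 2 ≤ N → W N ≥ (N : ℝ) ^ (p - ε))
    (ht : ∀ ε > (0 : ℝ), ∃ N₀ : ℕ, ∀ N : ℕ, N₀ ≤ N → 2 ≤ N → t N ≤ (N : ℝ) ^ (δ + ε))
    (hbound : ∀ N : ℕ, 2 ≤ N →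
      1 ≤ t N ∧ 1 ≤ m N ∧ m N ≤ (N : ℝ) ^ μ ∧
        1 ≤ s N ∧ s N ≤ (N : ℝ) ^ σ ∧
          m N * t N * s N ^ a ≥ W N) :
    a > p := by
  by_contra! hap
  obtain ⟨ε, hε⟩ : ∃ ε, ε = ((1 - σ) * p - μ - δ) / 3 := ⟨_, rfl⟩
  have hε0 : 0 < ε := by rw [hε]; linarith
  obtain ⟨N₁, h₁⟩ := hW ε hε0
  obtain ⟨N₂, h₂⟩ := ht ε hε0
  obtain ⟨N, hN₁, hN₂, hN⟩ : ∃ N : ℕ, N₁ ≤ N ∧ N₂ ≤ N ∧ 2 ≤ N :=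
    ⟨N₁ + N₂ + 2, by omega, by omega, by omega⟩
  have hWN := h₁ N hN₁ hN
  have htN := h₂ N hN₂ hN
  obtain ⟨ht1, hm1, hmN, hs1, hsN, hprod⟩ := hbound N hN
  have hN1 : (1 : ℝ) < N := by exact_mod_cast hN
  have hN0 : (0 : ℝ) < N := by linarith
  have hsa : s N ^ a ≤ (N : ℝ) ^ (σ * a) := by
    rw [Real.rpow_mul hN0.le]
    exact Real.rpow_le_rpow (by linarith) hsN ha
  have hle : (N : ℝ) ^ (p - ε) ≤ (N : ℝ) ^ (μ + (δ + ε) + σ * a) := by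
    calc (N : ℝ) ^ (p - ε) ≤ m N * t N * s N ^ a := hWN.le.trans hprod
      _ ≤ (N : ℝ) ^ μ * (N : ℝ) ^ (δ + ε) * (N : ℝ) ^ (σ * a) := by
        have : 0 ≤ s N ^ a := Real.rpow_nonneg (by linarith) a
        gcongr
      _ = (N : ℝ) ^ (μ + (δ + ε) + σ * a) := by
        rw [← Real.rpow_add hN0, ← Real.rpow_add hN0]
  have hexp := (Real.rpow_le_rpow_left_iff hN1).1 hle
  have hσa : σ * a ≤ σ * p := mul_le_mul_of_nonneg_left hap hσ.le
  linarith
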